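/- arXiv:1306.4549 — 2 statements merged into one kernel-verified Lean document; each statement's English description precedes it below -/
import Mathlib

section
/- Let D be the m×m difference matrix (D_{ii}=1, D_{i+1,i}=-1, zeros elsewhere). For every j ∈ {1,...,m}, the j-th largest singular value of D^{-1} satisfies (1/π)·((m+1/2)/(j-1/2)) ≤ σ_j(D^{-1}) ≤ (1/2)·((m+1/2)/(j-1/2)). -/
/-- The m×m lower bidiagonal difference matrix. -/
def Dmat (m : ℕ) : Matrix (Fin m) (Fin m) ℝ :=
  Matrix.of fun i j => if i = j then 1 else if (i : ℕ) = (j : ℕ) + 1 then -1 else 0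

/-- The j-th largest singular value of a rectangular matrix, via the
Courant–Fischer max-min characterization. -/
noncomputable def singVal {m k : ℕ} (A : Matrix (Fin m) (Fin k) ℝ) (j : ℕ) : ℝ :=
  ⨆ W : {W : Submodule ℝ (EuclideanSpace ℝ (Fin k)) // Module.finrank ℝ W = j},
    ⨅ v : {v : EuclideanSpace ℝ (Fin k) // v ∈ W.1 ∧ ‖v‖ = 1},
      ‖Matrix.toEuclideanLin A v.1‖

/-- A linear map whose Gram operator is diagonal in an orthonormal basis. -/
theorem norm_sq_apply_eq_sum_of_adjoint_apply {E F ι : Type*} [Fintype ι]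
    [NormedAddCommGroup E] [InnerProductSpace ℝ E] [FiniteDimensional ℝ E]
    [NormedAddCommGroup F] [InnerProductSpace ℝ F] [FiniteDimensional ℝ F]
    (A : E →ₗ[ℝ] F) (b : OrthonormalBasis ι ℝ E) (s : ι → ℝ)
    (h : ∀ k, LinearMap.adjoint A (A (b k)) = (s k ^ 2) • b k) (v : E) :
    ‖A v‖ ^ 2 = ∑ k, s k ^ 2 * inner ℝ (b k) v ^ 2 := by
  rw [← real_inner_self_eq_norm_sq, ← LinearMap.adjoint_inner_right, ← b.sum_inner_mul_inner]
  refine Finset.sum_congr rfl fun k _ => ?_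
  rw [LinearMap.adjoint_inner_right, ← LinearMap.adjoint_inner_left, h, real_inner_smul_left,
    real_inner_comm]
  ring

/-- The Courant–Fischer value of a matrix diagonalized by an orthonormal basis. -/
theorem singVal_eq_of_norm_sq_apply {m n : ℕ} (A : Matrix (Fin m) (Fin n) ℝ)
    (b : OrthonormalBasis (Fin n) ℝ (EuclideanSpace ℝ (Fin n))) (s : Fin n → ℝ)
    (s_nonneg : ∀ k, 0 ≤ s k) (s_anti : Antitone s)
    (h : ∀ v, ‖Matrix.toEuclideanLin A v‖ ^ 2 = ∑ k, s k ^ 2 * inner ℝ (b k) v ^ 2)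
    (j : Fin n) : singVal A (j + 1) = s j := by
  have norm_sum (v) (hv : ‖v‖ = 1) : ∑ k, inner ℝ (b k) v ^ 2 = 1 := by
    have := b.sum_sq_norm_inner_right v
    simpa [hv] using this
  have upper (W : {W : Submodule ℝ (EuclideanSpace ℝ (Fin n)) //
      Module.finrank ℝ W = (j : ℕ) + 1}) :
      ⨅ v : {v : EuclideanSpace ℝ (Fin n) // v ∈ W.1 ∧ ‖v‖ = 1},
        ‖Matrix.toEuclideanLin A v.1‖ ≤ s j := by
    let L : W.1 →ₗ[ℝ] (Fin j → ℝ) :=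
      LinearMap.pi fun k => (innerₛₗ ℝ (b ⟨k, k.2.trans j.2⟩)).comp W.1.subtype
    have hL : LinearMap.ker L ≠ ⊥ := LinearMap.ker_ne_bot_of_finrank_lt (by
      rw [W.2]; simp)
    obtain ⟨w, hw, hw0⟩ := Submodule.exists_mem_ne_zero_of_ne_bot hL
    have hw0' : ‖(w : EuclideanSpace ℝ (Fin n))‖ ≠ 0 := by simpa using hw0
    set v : EuclideanSpace ℝ (Fin n) := ‖(w : EuclideanSpace ℝ (Fin n))‖⁻¹ • w.1 with hv
    have hv1 : ‖v‖ = 1 := by rw [hv, norm_smul, norm_inv, norm_norm, inv_mul_cancel₀ hw0']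
    have hvW : v ∈ W.1 := W.1.smul_mem _ w.2
    have hperp (k : Fin n) (hk : k < j) : inner ℝ (b k) v = 0 := by
      have : inner ℝ (b k) w.1 = 0 := congrFun (LinearMap.mem_ker.1 hw) ⟨k, hk⟩
      rw [hv, real_inner_smul_right, this, mul_zero]
    refine (ciInf_le ⟨0, ?_⟩ (⟨v, hvW, hv1⟩ : {v // v ∈ W.1 ∧ ‖v‖ = 1})).trans ?_
    · rintro _ ⟨v, rfl⟩
      exact norm_nonneg _
    · refine le_of_sq_le_sq ?_ (s_nonneg j)
      change ‖Matrix.toEuclideanLin A v‖ ^ 2 ≤ _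
      rw [h, ← mul_one (s j ^ 2), ← norm_sum v hv1, Finset.mul_sum]
      refine Finset.sum_le_sum fun k _ => ?_
      rcases lt_or_ge k j with hk | hk
      · simp [hperp k hk]
      · have := s_nonneg k
        have := s_anti hk
        gcongr
  let c : Fin (j + 1) → Fin n := Fin.castLE j.2
  have hc : Function.Injective c := Fin.castLE_injective _
  let W : {W : Submodule ℝ (EuclideanSpace ℝ (Fin n)) // Module.finrank ℝ W = (j : ℕ) + 1} :=
    ⟨Submodule.span ℝ (Set.range (b ∘ c)), by
      rw [finrank_span_eq_card (b.orthonormal.comp c hc).linearIndependent, Fintype.card_fin]⟩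
  have : Nonempty {W : Submodule ℝ (EuclideanSpace ℝ (Fin n)) //
      Module.finrank ℝ W = (j : ℕ) + 1} := ⟨W⟩
  have : Nonempty {v : EuclideanSpace ℝ (Fin n) // v ∈ W.1 ∧ ‖v‖ = 1} :=
    ⟨b (c 0), Submodule.subset_span ⟨0, rfl⟩, b.orthonormal.1 _⟩
  refine le_antisymm (ciSup_le upper)
    (le_ciSup_of_le (⟨s j, ?_⟩ : BddAbove (Set.range _)) W (le_ciInf ?_))
  · rintro _ ⟨W, rfl⟩
    exact upper W
  · rintro ⟨v, hvW, hv1⟩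
    have hperp (k : Fin n) (hk : j < k) : inner ℝ (b k) v = 0 := by
      have hle : W.1 ≤ LinearMap.ker (innerₛₗ ℝ (b k)) := by
        refine Submodule.span_le.2 ?_
        rintro _ ⟨i, rfl⟩
        refine b.orthonormal.2 (Fin.ne_of_val_ne ?_)
        have : (c i : ℕ) = i := rfl
        have := i.2
        have : (j : ℕ) < k := hk
        omega
      exact hle hvW
    refine le_of_sq_le_sq ?_ (norm_nonneg _)
    change _ ≤ ‖Matrix.toEuclideanLin A v‖ ^ 2
    rw [h, ← mul_one (s j ^ 2), ← norm_sum v hv1, Finset.mul_sum]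
    refine Finset.sum_le_sum fun k _ => ?_
    rcases lt_or_ge j k with hk | hk
    · simp [hperp k hk]
    · have := s_nonneg j
      have := s_anti hk
      gcongr

theorem isUnit_det_Dmat (m : ℕ) : IsUnit (Dmat m).det := by
  rw [Matrix.det_of_isLowerTriangular]
  · simp [Dmat]
  · intro i j hij
    have : (i : ℕ) < j := hij
    simp only [Dmat, Matrix.of_apply, Fin.ext_iff]
    rw [if_neg (by omega), if_neg (by omega)]

theorem Dmat_mulVec_sub (m : ℕ) (h : ℕ → ℝ) (h0 : h 0 = 0) :
    (Dmat m).mulVec (fun i : Fin m => h (i + 1)) = fun i : Fin m => h (i + 1) - h i := by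
  ext i
  have : (Dmat m).mulVec (fun i : Fin m => h (i + 1)) i =
      ∑ b : Fin m, ((if (i : ℕ) = b then h ((b : ℕ) + 1) else 0) -
        if (i : ℕ) = (b : ℕ) + 1 then h ((b : ℕ) + 1) else 0) := by
    simp only [Matrix.mulVec, dotProduct]
    refine Finset.sum_congr rfl fun b _ => ?_
    simp only [Dmat, Matrix.of_apply, Fin.ext_iff]
    split_ifs <;> first | omega | simp
  rw [this, Fin.sum_univ_eq_sum_range (α := ℝ) (fun b => (if (i : ℕ) = b then h (b + 1) else 0) -
        if (i : ℕ) = b + 1 then h (b + 1) else 0), Finset.sum_sub_distrib, Finset.sum_ite_eq,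
    if_pos (Finset.mem_range.2 i.2)]
  congr 1
  obtain ⟨i, hi⟩ := i
  cases i with
  | zero => simp [h0]
  | succ i =>
    simp only [Nat.add_right_cancel_iff, Finset.sum_ite_eq]
    rw [if_pos (Finset.mem_range.2 (by omega))]

theorem Dmat_transpose_mulVec (m : ℕ) (f : ℕ → ℝ) (hf : f m = 0) :
    (Dmat m).transpose.mulVec (fun i : Fin m => f i) = fun i : Fin m => f i - f (i + 1) := by
  ext i
  have : (Dmat m).transpose.mulVec (fun i : Fin m => f i) i =
      ∑ b : Fin m, ((if (i : ℕ) = b then f b else 0) -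
        if (i : ℕ) + 1 = b then f b else 0) := by
    simp only [Matrix.mulVec, dotProduct]
    refine Finset.sum_congr rfl fun b _ => ?_
    simp only [Dmat, Matrix.transpose_apply, Matrix.of_apply, Fin.ext_iff]
    split_ifs <;> first | omega | simp
  rw [this, Fin.sum_univ_eq_sum_range (α := ℝ) (fun b => (if (i : ℕ) = b then f b else 0) -
        if (i : ℕ) + 1 = b then f b else 0), Finset.sum_sub_distrib, Finset.sum_ite_eq,
    if_pos (Finset.mem_range.2 i.2), Finset.sum_ite_eq]
  congr 1
  split_ifs with h
  · rfl
  · rw [← hf]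
    congr 1
    have := i.2
    simp at h
    omega

theorem Dmat_mul_transpose_mulVec_cos (m : ℕ) (θ : ℝ) (hθ : Real.cos ((m + 1 / 2) * θ) = 0) :
    (Dmat m * (Dmat m).transpose).mulVec (fun i : Fin m => Real.cos ((i + 1 / 2) * θ)) =
      (2 * Real.sin (θ / 2)) ^ 2 • fun i : Fin m => Real.cos ((i + 1 / 2) * θ) := by
  have key : (fun i : Fin m => Real.cos (((i : ℕ) + 1 / 2) * θ) -
      Real.cos ((((i : ℕ) + 1 : ℕ) + 1 / 2) * θ)) = fun i : Fin m =>
        (fun i : ℕ => 2 * Real.sin (θ / 2) * Real.sin (i * θ)) ((i : ℕ) + 1) := by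
    ext i
    rw [Real.cos_sub_cos]
    push_cast
    rw [show (((i : ℕ) + 1 / 2) * θ + ((i : ℕ) + 1 + 1 / 2) * θ) / 2 = ((i : ℕ) + 1) * θ by ring,
      show (((i : ℕ) + 1 / 2) * θ - ((i : ℕ) + 1 + 1 / 2) * θ) / 2 = -(θ / 2) by ring,
      Real.sin_neg]
    ring
  rw [← Matrix.mulVec_mulVec, Dmat_transpose_mulVec m (fun i => Real.cos ((i + 1 / 2) * θ)) hθ,
    key, Dmat_mulVec_sub m (fun i : ℕ => 2 * Real.sin (θ / 2) * Real.sin (i * θ)) (by simp)]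
  ext i
  simp only [Pi.smul_apply, smul_eq_mul]
  rw [← mul_sub, Real.sin_sub_sin]
  push_cast
  rw [show (((i : ℕ) + 1) * θ - (i : ℕ) * θ) / 2 = θ / 2 by ring,
    show (((i : ℕ) + 1) * θ + (i : ℕ) * θ) / 2 = ((i : ℕ) + 1 / 2) * θ by ring]
  ring

/-- Half of the angle parametrizing the singular values of the difference matrix. -/
noncomputable def halfAngle (m : ℕ) (k : Fin m) : ℝ :=
  Real.pi / 2 * ((k + 1 / 2) / (m + 1 / 2))

theorem halfAngle_pos (m : ℕ) (k : Fin m) : 0 < halfAngle m k := by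
  unfold halfAngle
  positivity

theorem halfAngle_lt (m : ℕ) (k : Fin m) : halfAngle m k < Real.pi / 2 := by
  have hk : ((k : ℕ) : ℝ) < m := Nat.cast_lt.2 k.2
  have : ((k : ℝ) + 1 / 2) / (m + 1 / 2) < 1 := by
    rw [div_lt_one (by positivity)]
    linarith
  unfold halfAngle
  nlinarith [Real.pi_pos]

theorem halfAngle_strictMono (m : ℕ) : StrictMono (halfAngle m) := by
  intro k l hkl
  have : ((k : ℕ) : ℝ) < l := Nat.cast_lt.2 hkl
  unfold halfAngle
  gcongr

theorem sin_halfAngle_pos (m : ℕ) (k : Fin m) : 0 < Real.sin (halfAngle m k) :=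
  Real.sin_pos_of_pos_of_lt_pi (halfAngle_pos m k) (by
    linarith [halfAngle_lt m k, Real.pi_pos])

theorem sin_halfAngle_strictMono (m : ℕ) : StrictMono fun k => Real.sin (halfAngle m k) :=
  fun k l hkl => Real.sin_lt_sin_of_lt_of_le_pi_div_two
    (by linarith [halfAngle_pos m k, Real.pi_pos]) (halfAngle_lt m l).le
    (halfAngle_strictMono m hkl)

theorem inv_Dmat_gram_mulVec {m : ℕ} {u : Fin m → ℝ} {c : ℝ} (hc : c ≠ 0)
    (h : (Dmat m * (Dmat m).transpose).mulVec u = c • u) :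
    ((Dmat m)⁻¹.transpose * (Dmat m)⁻¹).mulVec u = c⁻¹ • u := by
  have hD := isUnit_det_Dmat m
  have h1 : (Dmat m)⁻¹.transpose * (Dmat m)⁻¹ * (Dmat m * (Dmat m).transpose) = 1 := by
    rw [Matrix.mul_assoc, Matrix.nonsing_inv_mul_cancel_left _ _ hD, ← Matrix.transpose_mul,
      Matrix.mul_nonsing_inv _ hD, Matrix.transpose_one]
  rw [eq_inv_smul_iff₀ hc, ← Matrix.mulVec_smul, ← h, Matrix.mulVec_mulVec, h1, Matrix.one_mulVec]

theorem singVal_Dmat_inv (m : ℕ) (j : Fin m) :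
    singVal (Dmat m)⁻¹ (j + 1) = (2 * Real.sin (halfAngle m j))⁻¹ := by
  set A := Matrix.toEuclideanLin (Dmat m)⁻¹ with hA
  set s : Fin m → ℝ := fun k => (2 * Real.sin (halfAngle m k))⁻¹ with hs
  have hsin := sin_halfAngle_pos m
  have s_pos (k) : 0 < s k := inv_pos.2 (by linarith [hsin k])
  have s_anti : StrictAnti s := fun k l hkl =>
    inv_strictAnti₀ (by linarith [hsin k]) (by linarith [sin_halfAngle_strictMono m hkl])
  let u : Fin m → EuclideanSpace ℝ (Fin m) := fun k =>
    WithLp.toLp 2 fun i => Real.cos ((i + 1 / 2) * (2 * halfAngle m k))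
  have gram (k) : LinearMap.adjoint A (A (u k)) = (s k ^ 2) • u k := by
    have hcos : Real.cos ((m + 1 / 2) * (2 * halfAngle m k)) = 0 := by
      rw [Real.cos_eq_zero_iff]
      refine ⟨k, ?_⟩
      unfold halfAngle
      push_cast
      field_simp
    have h1 := inv_Dmat_gram_mulVec (pow_ne_zero 2 (by
      rw [mul_div_cancel_left₀ _ two_ne_zero]; linarith [hsin k]))
      (Dmat_mul_transpose_mulVec_cos m _ hcos)
    rw [mul_div_cancel_left₀ _ (two_ne_zero' ℝ), ← inv_pow] at h1
    rw [hA, ← Matrix.toEuclideanLin_conjTranspose_eq_adjoint,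
      Matrix.conjTranspose_eq_transpose_of_trivial]
    simp only [Matrix.toLpLin_apply, u, Matrix.mulVec_mulVec, h1, hs]
    rfl
  have u_ne (k) : u k ≠ 0 := by
    intro h
    have h0 : Real.cos (((0 : ℕ) + 1 / 2) * (2 * halfAngle m k)) = 0 :=
      congrArg (fun v : EuclideanSpace ℝ (Fin m) => v ⟨0, k.pos⟩) h
    rw [show ((0 : ℕ) + 1 / 2) * (2 * halfAngle m k) = halfAngle m k by push_cast; ring] at h0
    exact (Real.cos_pos_of_mem_Ioo
      ⟨by linarith [halfAngle_pos m k, Real.pi_pos], halfAngle_lt m k⟩).ne' h0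
  have u_orth (k l) (hkl : k ≠ l) : inner ℝ (u k) (u l) = 0 := by
    have h1 : s k ^ 2 * inner ℝ (u k) (u l) = s l ^ 2 * inner ℝ (u k) (u l) := by
      rw [← real_inner_smul_left, ← real_inner_smul_right, ← gram, ← gram,
        LinearMap.adjoint_inner_left, LinearMap.adjoint_inner_right]
    by_contra h0
    have h2 := (sq_eq_sq₀ (s_pos k).le (s_pos l).le).1 (mul_right_cancel₀ h0 h1)
    exact hkl (s_anti.injective h2)
  let w : Fin m → EuclideanSpace ℝ (Fin m) := fun k => ‖u k‖⁻¹ • u k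
  have w_orth : Orthonormal ℝ w := by
    refine ⟨fun k => ?_, fun k l hkl => ?_⟩
    · rw [norm_smul, norm_inv, norm_norm, inv_mul_cancel₀ (norm_ne_zero_iff.2 (u_ne k))]
    · change inner ℝ (‖u k‖⁻¹ • u k) (‖u l‖⁻¹ • u l) = 0
      rw [real_inner_smul_left, real_inner_smul_right, u_orth k l hkl, mul_zero, mul_zero]
  let b : OrthonormalBasis (Fin m) ℝ (EuclideanSpace ℝ (Fin m)) :=
    OrthonormalBasis.mk w_orth
      (w_orth.linearIndependent.span_eq_top_of_card_eq_finrank' (by simp)).ge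
  refine singVal_eq_of_norm_sq_apply _ b s (fun k => (s_pos k).le) s_anti.antitone
    (norm_sq_apply_eq_sum_of_adjoint_apply A b s fun k => ?_) j
  simp only [b, OrthonormalBasis.coe_mk, w, map_smul, gram, smul_comm (s k ^ 2)]

/-- bounds on the singular values of D⁻¹. -/
theorem singVal_Dinv_bounds (m j : ℕ) (hj1 : 1 ≤ j) (hjm : j ≤ m) :
    (1 / Real.pi) * (((m : ℝ) + 1 / 2) / ((j : ℝ) - 1 / 2)) ≤ singVal (Dmat m)⁻¹ j ∧
      singVal (Dmat m)⁻¹ j ≤ (1 / 2) * (((m : ℝ) + 1 / 2) / ((j : ℝ) - 1 / 2)) := by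
  obtain ⟨k, rfl⟩ := Nat.exists_eq_add_of_le' hj1
  rw [singVal_Dmat_inv m ⟨k, hjm⟩]
  have hpos := sin_halfAngle_pos m ⟨k, hjm⟩
  have hx : (((k + 1 : ℕ) : ℝ) - 1 / 2) = k + 1 / 2 := by push_cast; ring
  have hmul : 2 / Real.pi * halfAngle m ⟨k, hjm⟩ = (k + 1 / 2) / (m + 1 / 2) := by
    unfold halfAngle
    field_simp
  have lower := Real.mul_le_sin (halfAngle_pos m ⟨k, hjm⟩).le (halfAngle_lt m ⟨k, hjm⟩).le
  have upper := (Real.sin_lt (halfAngle_pos m ⟨k, hjm⟩)).le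
  rw [hx, ← inv_div ((k : ℝ) + 1 / 2), one_div, one_div, ← mul_inv, ← mul_inv]
  constructor
  · refine inv_anti₀ (by positivity) ?_
    have : Real.pi * (((k : ℝ) + 1 / 2) / (m + 1 / 2)) = 2 * halfAngle m ⟨k, hjm⟩ := by
      unfold halfAngle
      ring
    linarith
  · refine inv_anti₀ (by positivity) ?_
    linarith
end

section
/- Let D be the m×m difference matrix and r a positive integer. Then for every j ∈ {1,...,m}, the j-th largest singular value of D^{-r} satisfies (1/(3πr))^r·(m/j)^r ≤ σ_j(D^{-r}) ≤ (6r)^r·(m/j)^r. -/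
open Polynomial in
/-- The first `m` coefficients of a polynomial, as a vector. -/
noncomputable def coeffVec (m : ℕ) : ℝ[X] →ₗ[ℝ] (Fin m → ℝ) where
  toFun p := fun i => p.coeff i
  map_add' p q := by ext i; simp
  map_smul' c p := by ext i; simp

lemma Dmat_mulVec {m : ℕ} (f : ℕ → ℝ) :
    (Dmat m).mulVec (fun i : Fin m => f i) =
      fun i : Fin m => f i - if 1 ≤ (i : ℕ) then f (i - 1) else 0 := by
  ext i
  have h : ∀ k : Fin m, Dmat m i k * f k =
      (if k = i then f i else 0) - (if (k : ℕ) + 1 = i then f (i - 1) else 0) := by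
    intro k
    simp only [Dmat, Matrix.of_apply]
    by_cases h1 : i = k
    · subst h1; simp
    · rw [if_neg h1, if_neg (fun h : k = i => h1 h.symm)]
      by_cases h2 : (i : ℕ) = k + 1
      · rw [if_pos h2, if_pos h2.symm, h2]; simp
      · rw [if_neg h2, if_neg (fun h : (k : ℕ) + 1 = i => h2 h.symm)]; simp
  simp only [Matrix.mulVec, dotProduct, h, Finset.sum_sub_distrib]
  congr 1
  · simp
  · split_ifs with hi
    · rw [Finset.sum_eq_single (⟨i - 1, by omega⟩ : Fin m)]
      · rw [if_pos]; simp; omega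
      · intro k _ hk
        rw [if_neg]
        intro h'
        apply hk
        ext
        simp
        omega
      · simp
    · apply Finset.sum_eq_zero
      intro k _
      rw [if_neg]
      omega

lemma Dmat_det (m : ℕ) : (Dmat m).det = 1 := by
  rw [Matrix.det_of_isLowerTriangular]
  · simp [Dmat]
  · intro i k hik
    have : i < k := hik
    simp only [Dmat, Matrix.of_apply]
    rw [if_neg (by omega), if_neg (by omega)]

lemma Dmat_inv_mul (m : ℕ) : (Dmat m)⁻¹ * Dmat m = 1 :=
  Matrix.nonsing_inv_mul _ (by simp [Dmat_det])

lemma Dmat_mul_inv (m : ℕ) : Dmat m * (Dmat m)⁻¹ = 1 :=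
  Matrix.mul_nonsing_inv _ (by simp [Dmat_det])

lemma Dmat_inv_pow_mul_pow (m r : ℕ) : (Dmat m)⁻¹ ^ r * Dmat m ^ r = 1 := by
  have hc : Commute (Dmat m)⁻¹ (Dmat m) := by
    rw [Commute, SemiconjBy, Dmat_inv_mul, Dmat_mul_inv]
  rw [← hc.mul_pow, Dmat_inv_mul, one_pow]

open Polynomial in
lemma Dmat_mulVec_coeffVec (m : ℕ) (p : ℝ[X]) :
    (Dmat m).mulVec (coeffVec m p) = coeffVec m ((1 - X) * p) := by
  have h := Dmat_mulVec (m := m) p.coeff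
  have h' : coeffVec m p = fun i : Fin m => p.coeff i := rfl
  rw [h', h]
  ext i
  have := Polynomial.coeff_X_pow_mul' p 1 i
  rw [pow_one] at this
  simp [coeffVec, sub_mul, this]

open Polynomial in
lemma Dmat_pow_mulVec_coeffVec (m r : ℕ) (p : ℝ[X]) :
    (Dmat m ^ r).mulVec (coeffVec m p) = coeffVec m ((1 - X) ^ r * p) := by
  induction r generalizing p with
  | zero => simp
  | succ r ih =>
    rw [pow_succ, ← Matrix.mulVec_mulVec, Dmat_mulVec_coeffVec, ih, pow_succ, mul_assoc]

lemma sum_shift_le (m t : ℕ) (f : ℕ → ℝ) (hf : ∀ n, 0 ≤ f n) :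
    ∑ n ∈ Finset.range m, (if t ≤ n then f (n - t) else 0) ≤ ∑ n ∈ Finset.range m, f n := by
  rw [← Finset.sum_filter]
  have hinj : Set.InjOn (fun n => n - t) ((Finset.range m).filter (t ≤ ·) : Finset ℕ) := by
    intro a ha b hb hab
    simp only [Finset.coe_filter, Set.mem_ofPred_eq] at ha hb
    simp only at hab
    omega
  rw [← Finset.sum_image (f := f) (g := fun n => n - t) hinj]
  apply Finset.sum_le_sum_of_subset_of_nonneg
  · intro n hn
    simp only [Finset.mem_image, Finset.mem_filter, Finset.mem_range] at hn ⊢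
    omega
  · intro n _ _
    exact hf n

open Polynomial in
lemma sum_sq_coeff_one_sub_X_pow_mul_le (m s r : ℕ) (g : ℝ[X]) :
    ∑ n ∈ Finset.range m, (((1 - X ^ s) ^ r * g).coeff n) ^ 2 ≤
      4 ^ r * ∑ n ∈ Finset.range m, (g.coeff n) ^ 2 := by
  induction r with
  | zero => simp
  | succ r ih =>
    set h := (1 - X ^ s) ^ r * g with hh
    have e : (1 - X ^ s) ^ (r + 1) * g = h - X ^ s * h := by rw [hh]; ring
    rw [e]
    have h1 : ∀ n ∈ Finset.range m, ((h - X ^ s * h).coeff n) ^ 2 ≤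
        2 * (h.coeff n) ^ 2 + 2 * (if s ≤ n then (h.coeff (n - s)) ^ 2 else 0) := by
      intro n _
      rw [coeff_sub, coeff_X_pow_mul']
      split_ifs
      · nlinarith [sq_nonneg (h.coeff n + h.coeff (n - s))]
      · nlinarith [sq_nonneg (h.coeff n)]
    have h2 := Finset.sum_le_sum h1
    rw [Finset.sum_add_distrib, ← Finset.mul_sum, ← Finset.mul_sum] at h2
    have h3 := sum_shift_le m s (fun n => (h.coeff n) ^ 2) (fun n => sq_nonneg _)
    rw [pow_succ]
    linarith

open Polynomial in
/-- Disjoint translates of the polynomial `b`, combined with coefficients `c`. -/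
noncomputable def blockPoly (l j : ℕ) (b : ℝ[X]) : (Fin j → ℝ) →ₗ[ℝ] ℝ[X] where
  toFun c := ∑ k : Fin j, c k • (X ^ (l * k) * b)
  map_add' c d := by simp [add_smul, Finset.sum_add_distrib]
  map_smul' a c := by simp [mul_smul, Finset.smul_sum]

open Polynomial in
lemma blockPoly_mul (l j : ℕ) (p b : ℝ[X]) (c : Fin j → ℝ) :
    blockPoly l j (p * b) c = p * blockPoly l j b c := by
  simp only [blockPoly, LinearMap.coe_mk, AddHom.coe_mk, Finset.mul_sum, mul_smul_comm]
  refine Finset.sum_congr rfl fun k _ => ?_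
  congr 1
  ring

open Polynomial in
lemma coeff_blockPoly (l j : ℕ) (b : ℝ[X]) (hb : b.natDegree < l) (c : Fin j → ℝ)
    (q i : ℕ) (hi : i < l) :
    (blockPoly l j b c).coeff (l * q + i) = if h : q < j then c ⟨q, h⟩ * b.coeff i else 0 := by
  have key : ∀ k : Fin j, (c k • (X ^ (l * (k : ℕ)) * b)).coeff (l * q + i) =
      if (k : ℕ) = q then c k * b.coeff i else 0 := by
    intro k
    rw [coeff_smul, coeff_X_pow_mul', smul_eq_mul]
    rcases lt_trichotomy (k : ℕ) q with h | h | h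
    · have h1 : l * ((k : ℕ) + 1) ≤ l * q := Nat.mul_le_mul_left _ h
      rw [mul_add] at h1
      rw [if_neg h.ne, if_pos (by omega), coeff_eq_zero_of_natDegree_lt (by omega), mul_zero]
    · subst h
      simp
    · have h1 : l * (q + 1) ≤ l * k := Nat.mul_le_mul_left _ h
      rw [mul_add] at h1
      rw [if_neg h.ne', if_neg (by omega), mul_zero]
  simp only [blockPoly, LinearMap.coe_mk, AddHom.coe_mk, finsetSum_coeff, key]
  split_ifs with h
  · rw [Finset.sum_eq_single (⟨q, h⟩ : Fin j)]
    · simp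
    · intro k _ hk
      rw [if_neg]
      exact fun h' => hk (Fin.ext h')
    · simp
  · apply Finset.sum_eq_zero
    intro k _
    rw [if_neg]
    omega

lemma sum_range_mul_add (l j : ℕ) (f : ℕ → ℝ) :
    ∑ n ∈ Finset.range (l * j), f n =
      ∑ q ∈ Finset.range j, ∑ i ∈ Finset.range l, f (l * q + i) := by
  induction j with
  | zero => simp
  | succ j ih => rw [Finset.sum_range_succ, ← ih, mul_add, mul_one, Finset.sum_range_add]

open Polynomial in
lemma sum_sq_coeff_blockPoly (m l j : ℕ) (b : ℝ[X]) (hb : b.natDegree < l) (hm : l * j ≤ m)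
    (c : Fin j → ℝ) :
    ∑ n ∈ Finset.range m, ((blockPoly l j b c).coeff n) ^ 2 =
      (∑ k, c k ^ 2) * ∑ i ∈ Finset.range l, (b.coeff i) ^ 2 := by
  have hl : 0 < l := by omega
  have h1 : ∑ n ∈ Finset.range m, ((blockPoly l j b c).coeff n) ^ 2 =
      ∑ n ∈ Finset.range (l * j), ((blockPoly l j b c).coeff n) ^ 2 := by
    symm
    apply Finset.sum_subset
    · intro n hn
      simp only [Finset.mem_range] at hn ⊢
      omega
    · intro n _ hn
      simp only [Finset.mem_range, not_lt] at hn
      have h2 := coeff_blockPoly l j b hb c (n / l) (n % l) (Nat.mod_lt _ hl)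
      rw [Nat.div_add_mod, dif_neg] at h2
      · rw [h2]; simp
      · rw [not_lt, Nat.le_div_iff_mul_le hl, mul_comm]
        exact hn
  rw [h1, sum_range_mul_add, Finset.sum_range, Finset.sum_mul]
  refine Finset.sum_congr rfl fun k _ => ?_
  rw [Finset.mul_sum]
  refine Finset.sum_congr rfl fun i hi => ?_
  rw [coeff_blockPoly l j b hb c k i (Finset.mem_range.1 hi), dif_pos k.2, mul_pow]

lemma le_norm_of_sum_sq {m : ℕ} (x y : EuclideanSpace ℝ (Fin m)) (C : ℝ)
    (h : C ^ 2 * ∑ i, x i ^ 2 ≤ ∑ i, y i ^ 2) : C * ‖x‖ ≤ ‖y‖ := by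
  refine (abs_le_of_sq_le_sq' ?_ (by positivity)).2
  rw [mul_pow, EuclideanSpace.norm_sq_eq, EuclideanSpace.norm_sq_eq]
  simpa using h

lemma singVal_le {m k : ℕ} (A : Matrix (Fin m) (Fin k) ℝ) (j : ℕ) (C : ℝ) (hC : 0 ≤ C)
    (h : ∀ W : Submodule ℝ (EuclideanSpace ℝ (Fin k)), Module.finrank ℝ W = j →
      ∃ v ∈ W, v ≠ 0 ∧ ‖Matrix.toEuclideanLin A v‖ ≤ C * ‖v‖) : singVal A j ≤ C := by
  refine Real.iSup_le (fun W => ?_) hC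
  obtain ⟨v, hv, hv0, hle⟩ := h W.1 W.2
  have hn : 0 < ‖v‖ := norm_pos_iff.2 hv0
  have hu : ‖(‖v‖)⁻¹ • v‖ = 1 := by
    rw [norm_smul, norm_inv, norm_norm, inv_mul_cancel₀ hn.ne']
  refine (ciInf_le ⟨0, ?_⟩ (⟨(‖v‖)⁻¹ • v, W.1.smul_mem _ hv, hu⟩ :
    {v : EuclideanSpace ℝ (Fin k) // v ∈ W.1 ∧ ‖v‖ = 1})).trans ?_
  · rintro _ ⟨u, rfl⟩
    exact norm_nonneg _
  · simp only [map_smul, norm_smul, norm_inv, norm_norm]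
    rw [inv_mul_le_iff₀ hn, mul_comm]
    exact hle

lemma le_singVal {m k : ℕ} (A : Matrix (Fin m) (Fin k) ℝ) (j : ℕ) (hj : 1 ≤ j) (C : ℝ)
    (T : (Fin j → ℝ) →ₗ[ℝ] EuclideanSpace ℝ (Fin k)) (hT : Function.Injective T)
    (h : ∀ c, C * ‖T c‖ ≤ ‖Matrix.toEuclideanLin A (T c)‖) : C ≤ singVal A j := by
  have hunit : ∀ W : Submodule ℝ (EuclideanSpace ℝ (Fin k)), Module.finrank ℝ W = j →
      ∃ v ∈ W, ‖v‖ = 1 := by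
    intro W hW
    have : Nontrivial W := Module.nontrivial_of_finrank_pos (R := ℝ) (by omega)
    obtain ⟨v, hv⟩ := exists_norm_eq W zero_le_one
    exact ⟨v, v.2, hv⟩
  have hbdd : BddAbove (Set.range fun W : {W : Submodule ℝ (EuclideanSpace ℝ (Fin k)) //
      Module.finrank ℝ W = j} => ⨅ v : {v : EuclideanSpace ℝ (Fin k) // v ∈ W.1 ∧ ‖v‖ = 1},
      ‖Matrix.toEuclideanLin A v.1‖) := by
    refine ⟨‖(Matrix.toEuclideanLin A).toContinuousLinearMap‖, ?_⟩
    rintro _ ⟨W, rfl⟩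
    obtain ⟨v, hv, hv1⟩ := hunit W.1 W.2
    refine (ciInf_le ⟨0, ?_⟩ (⟨v, hv, hv1⟩ :
      {v : EuclideanSpace ℝ (Fin k) // v ∈ W.1 ∧ ‖v‖ = 1})).trans ?_
    · rintro _ ⟨u, rfl⟩
      exact norm_nonneg _
    · have := (Matrix.toEuclideanLin A).toContinuousLinearMap.le_opNorm v
      rw [hv1, mul_one] at this
      exact this
  have hr : Module.finrank ℝ (LinearMap.range T) = j := by
    rw [LinearMap.finrank_range_of_inj hT, Module.finrank_fin_fun]
  refine le_trans ?_ (le_ciSup hbdd ⟨LinearMap.range T, hr⟩)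
  obtain ⟨v, hv, hv1⟩ := hunit _ hr
  have : Nonempty {v : EuclideanSpace ℝ (Fin k) // v ∈ LinearMap.range T ∧ ‖v‖ = 1} :=
    ⟨⟨v, hv, hv1⟩⟩
  apply le_ciInf
  rintro ⟨_, ⟨c, rfl⟩, hc⟩
  have := h c
  rw [hc, mul_one] at this
  exact this

open Polynomial in
lemma le_singVal_of_blockPoly (m r j l : ℕ) (hj : 1 ≤ j) (hm : l * j ≤ m) (b : ℝ[X])
    (hb : b.natDegree < l) (hb0 : b ≠ 0) (C : ℝ)
    (h : ∀ c, C ^ 2 * ∑ n ∈ Finset.range m, ((blockPoly l j ((1 - X) ^ r * b) c).coeff n) ^ 2 ≤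
      ∑ n ∈ Finset.range m, ((blockPoly l j b c).coeff n) ^ 2) :
    C ≤ singVal ((Dmat m)⁻¹ ^ r) j := by
  let T : (Fin j → ℝ) →ₗ[ℝ] EuclideanSpace ℝ (Fin m) :=
    (WithLp.linearEquiv 2 ℝ (Fin m → ℝ)).symm.toLinearMap ∘ₗ
      coeffVec m ∘ₗ blockPoly l j ((1 - X) ^ r * b)
  have hAT : ∀ c, Matrix.toEuclideanLin ((Dmat m)⁻¹ ^ r) (T c) =
      WithLp.toLp 2 (coeffVec m (blockPoly l j b c)) := by
    intro c
    have : T c = WithLp.toLp 2 (coeffVec m (blockPoly l j ((1 - X) ^ r * b) c)) := rfl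
    rw [this, Matrix.toEuclideanLin, Matrix.toLpLin_toLp, Matrix.toLin'_apply, blockPoly_mul,
      ← Dmat_pow_mulVec_coeffVec, Matrix.mulVec_mulVec, Dmat_inv_pow_mul_pow, Matrix.one_mulVec]
  refine le_singVal _ j hj C T ?_ ?_
  · rw [← LinearMap.ker_eq_bot, LinearMap.ker_eq_bot']
    intro c hc
    have h1 := hAT c
    rw [hc, map_zero] at h1
    have h2 : ∀ i : Fin m, (blockPoly l j b c).coeff i = 0 := by
      intro i
      exact (congrArg (fun x : EuclideanSpace ℝ (Fin m) => x i) h1).symm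
    have h3 := sum_sq_coeff_blockPoly m l j b hb hm c
    rw [Finset.sum_range] at h3
    simp only [h2] at h3
    have h4 : ∑ i ∈ Finset.range l, (b.coeff i) ^ 2 ≠ 0 := by
      intro h5
      rw [Finset.sum_eq_zero_iff_of_nonneg (fun _ _ => sq_nonneg _)] at h5
      have := h5 _ (Finset.mem_range.2 hb)
      simp [hb0] at this
    have h6 : ∑ k, c k ^ 2 = 0 := by
      have : (∑ k, c k ^ 2) * ∑ i ∈ Finset.range l, (b.coeff i) ^ 2 = 0 := by
        rw [← h3]; simp
      exact (mul_eq_zero.1 this).resolve_right h4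
    rw [Finset.sum_eq_zero_iff_of_nonneg (fun _ _ => sq_nonneg _)] at h6
    ext k
    simpa using h6 k (Finset.mem_univ _)
  · intro c
    apply le_norm_of_sum_sq
    rw [hAT]
    have := h c
    rw [Finset.sum_range, Finset.sum_range] at this
    exact this

lemma le_singVal_of_le_one (m r j : ℕ) (hj : 1 ≤ j) (hjm : j ≤ m) (x : ℝ) (hx : 0 ≤ x)
    (h : 2 * x ≤ 1) : x ^ r ≤ singVal ((Dmat m)⁻¹ ^ r) j := by
  refine le_singVal_of_blockPoly m r j 1 hj (by omega) 1 (by simp) one_ne_zero _ fun c => ?_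
  rw [blockPoly_mul]
  have h1 := sum_sq_coeff_one_sub_X_pow_mul_le m 1 r (blockPoly 1 j 1 c)
  rw [pow_one] at h1
  have h2 : (x ^ r) ^ 2 * 4 ^ r ≤ 1 := by
    have : (x ^ r) ^ 2 * 4 ^ r = ((2 * x) ^ r) ^ 2 := by
      rw [mul_pow, mul_pow, ← pow_mul 2 r 2, mul_comm r 2, pow_mul 2 2 r]; norm_num; ring
    rw [this]
    exact pow_le_one₀ (by positivity) (pow_le_one₀ (by positivity) h)
  have h3 : 0 ≤ ∑ n ∈ Finset.range m, ((blockPoly 1 j 1 c).coeff n) ^ 2 :=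
    Finset.sum_nonneg fun _ _ => sq_nonneg _
  calc _ ≤ (x ^ r) ^ 2 * (4 ^ r * ∑ n ∈ Finset.range m, ((blockPoly 1 j 1 c).coeff n) ^ 2) := by
        gcongr
    _ = ((x ^ r) ^ 2 * 4 ^ r) * ∑ n ∈ Finset.range m, ((blockPoly 1 j 1 c).coeff n) ^ 2 := by ring
    _ ≤ 1 * _ := by gcongr
    _ = _ := one_mul _

open Polynomial in
lemma le_singVal_of_box (m r j s : ℕ) (hj : 1 ≤ j) (hs : 1 ≤ s) (hm : (r + 1) * s * j ≤ m)
    (x : ℝ) (h : 8 * x ^ 2 ≤ (s : ℝ) ^ 2) :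
    x ^ r ≤ singVal ((Dmat m)⁻¹ ^ r) j := by
  set B : ℝ[X] := ∑ i ∈ Finset.range s, X ^ i with hB
  set l := (r + 1) * s with hl
  have hBdeg : B.natDegree ≤ s - 1 := by
    apply natDegree_sum_le_of_forall_le
    intro i hi
    rw [natDegree_X_pow]
    have := Finset.mem_range.1 hi
    omega
  have hsl : s ≤ l := by rw [hl]; nlinarith
  have hBl : B.natDegree < l := by omega
  have hBe : B.eval 1 = s := by simp [hB, eval_finsetSum]
  have hBc : ∀ i ∈ Finset.range s, B.coeff i = 1 := by
    intro i hi
    simp only [hB, finsetSum_coeff, coeff_X_pow]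
    rw [Finset.sum_ite_eq]
    simp [Finset.mem_range.1 hi]
  have hBsq : ∑ i ∈ Finset.range l, (B.coeff i) ^ 2 = s := by
    rw [← Finset.sum_subset (Finset.range_subset_range.2 hsl)]
    · rw [Finset.sum_congr rfl fun i hi => by rw [hBc i hi]]
      simp
    · intro i _ hi
      rw [coeff_eq_zero_of_natDegree_lt]
      · simp
      · simp at hi; omega
  set b := B ^ (r + 1) with hb
  have hbl : b.natDegree < l := by
    have h1 : b.natDegree ≤ (r + 1) * (s - 1) :=
      natDegree_pow_le.trans (Nat.mul_le_mul_left _ hBdeg)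
    have h2 : (r + 1) * (s - 1) < (r + 1) * s := Nat.mul_lt_mul_of_pos_left (by omega) (by omega)
    omega
  have hbe : ∑ i ∈ Finset.range l, b.coeff i = (s : ℝ) ^ (r + 1) := by
    have := eval_eq_sum_range' hbl 1
    simp only [one_pow, mul_one] at this
    rw [← this, hb, eval_pow, hBe]
  have hs0 : (0 : ℝ) < s := by exact_mod_cast hs
  have hb0 : b ≠ 0 := by
    intro h0
    have hp := pow_pos hs0 (r + 1)
    simp only [h0, coeff_zero, Finset.sum_const_zero] at hbe
    linarith
  have hfac : (1 - X) ^ r * b = (1 - X ^ s) ^ r * B := by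
    have : (1 - X) * B = 1 - X ^ s := by rw [hB, mul_comm]; exact geom_sum_mul_neg X s
    rw [← this, hb, mul_pow]
    ring
  have hbsq : (s : ℝ) ^ (2 * r + 1) ≤ (r + 1) * ∑ i ∈ Finset.range l, (b.coeff i) ^ 2 := by
    have := sq_sum_le_card_mul_sum_sq (s := Finset.range l) (f := fun i => b.coeff i)
    rw [hbe, Finset.card_range, hl] at this
    push_cast at this
    have e : ((s : ℝ) ^ (r + 1)) ^ 2 = s ^ (2 * r + 1) * s := by ring
    rw [e] at this
    refine le_of_mul_le_mul_right ?_ hs0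
    calc _ ≤ _ := this
      _ = _ := by ring
  refine le_singVal_of_blockPoly m r j l hj hm b hbl hb0 _ fun c => ?_
  rw [hfac, blockPoly_mul, sum_sq_coeff_blockPoly m l j b hbl hm c]
  have h1 := sum_sq_coeff_one_sub_X_pow_mul_le m s r (blockPoly l j B c)
  rw [sum_sq_coeff_blockPoly m l j B hBl hm c, hBsq] at h1
  have hc : 0 ≤ ∑ k, c k ^ 2 := Finset.sum_nonneg fun _ _ => sq_nonneg _
  have hr2 : (r : ℝ) + 1 ≤ 2 ^ r := by exact_mod_cast Nat.lt_two_pow_self (n := r)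
  have hx2 : 8 ^ r * (x ^ r) ^ 2 ≤ (s : ℝ) ^ (2 * r) := by
    have := pow_le_pow_left₀ (by positivity) h r
    rw [mul_pow, ← pow_mul (s : ℝ)] at this
    rw [← pow_mul, mul_comm r 2, pow_mul x]
    exact this
  have key : (x ^ r) ^ 2 * (4 ^ r * s) ≤ ∑ i ∈ Finset.range l, (b.coeff i) ^ 2 := by
    have hr0 : (0 : ℝ) < r + 1 := by positivity
    refine le_of_mul_le_mul_left ?_ hr0
    calc ((r : ℝ) + 1) * ((x ^ r) ^ 2 * (4 ^ r * s))
        ≤ 2 ^ r * ((x ^ r) ^ 2 * (4 ^ r * s)) := by gcongr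
      _ = (8 ^ r * (x ^ r) ^ 2) * s := by
        rw [show (8 : ℝ) = 2 * 4 by norm_num, mul_pow]; ring
      _ ≤ s ^ (2 * r) * s := by gcongr
      _ = s ^ (2 * r + 1) := by ring
      _ ≤ _ := hbsq
  calc _ ≤ (x ^ r) ^ 2 * (4 ^ r * ((∑ k, c k ^ 2) * s)) := by gcongr
    _ = (∑ k, c k ^ 2) * ((x ^ r) ^ 2 * (4 ^ r * s)) := by ring
    _ ≤ _ := by gcongr

lemma sum_sq_le_of_block_sums (L m : ℕ) (hL : 0 < L) (x y : ℕ → ℝ)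
    (h0 : ∀ n < m, n % L = 0 → y n = x n)
    (h1 : ∀ n < m, n % L ≠ 0 → y n = y (n - 1) + x n) :
    ∑ n ∈ Finset.range m, y n ^ 2 ≤ (L : ℝ) ^ 2 * ∑ n ∈ Finset.range m, x n ^ 2 := by
  have hy : ∀ n < m, y n = ∑ t ∈ Finset.range (n % L + 1), x (n - t) := by
    intro n
    induction n with
    | zero => intro hn; rw [h0 0 hn (Nat.zero_mod L)]; simp
    | succ n ih =>
      intro hn
      by_cases hz : (n + 1) % L = 0
      · rw [hz]; simp [h0 _ hn hz]
      · have hmod : (n + 1) % L = n % L + 1 := by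
          rw [Nat.add_mod] at hz ⊢
          have h2 := Nat.mod_lt n hL
          rcases Nat.lt_or_ge 1 L with h3 | h3
          · rw [Nat.mod_eq_of_lt h3] at hz ⊢
            rcases Nat.lt_or_ge (n % L + 1) L with h4 | h4
            · exact Nat.mod_eq_of_lt h4
            · exact absurd (by rw [show n % L + 1 = L by omega, Nat.mod_self]) hz
          · have : L = 1 := by omega
            subst this
            simp [Nat.mod_one] at hz
        rw [h1 _ hn hz, hmod, Finset.sum_range_succ', Nat.add_sub_cancel, ih (by omega)]
        simp
  have hsq : ∀ n ∈ Finset.range m, y n ^ 2 ≤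
      L * ∑ t ∈ Finset.range L, (if t ≤ n then x (n - t) ^ 2 else 0) := by
    intro n hn
    rw [hy n (Finset.mem_range.1 hn)]
    refine sq_sum_le_card_mul_sum_sq.trans ?_
    have hlt := Nat.mod_lt n hL
    have hle := Nat.mod_le n L
    rw [Finset.card_range]
    refine mul_le_mul (by exact_mod_cast hlt) ?_ (Finset.sum_nonneg fun _ _ => sq_nonneg _)
      (Nat.cast_nonneg L)
    · calc _ = ∑ t ∈ Finset.range (n % L + 1), (if t ≤ n then x (n - t) ^ 2 else 0) := by
            refine Finset.sum_congr rfl fun t ht => ?_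
            rw [if_pos]
            have := Finset.mem_range.1 ht
            omega
        _ ≤ _ := by
            apply Finset.sum_le_sum_of_subset_of_nonneg
            · exact Finset.range_subset_range.2 hlt
            · intro t _ _
              split_ifs <;> positivity
  refine (Finset.sum_le_sum hsq).trans ?_
  rw [← Finset.mul_sum, Finset.sum_comm, sq, mul_assoc]
  gcongr
  refine (Finset.sum_le_card_nsmul _ _ _ fun t _ =>
    sum_shift_le m t (fun n => x n ^ 2) fun n => sq_nonneg _).trans ?_
  simp

lemma sum_sq_le_of_Dmat_mulVec (L m : ℕ) (hL : 0 < L) (x y : Fin m → ℝ)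
    (hxy : (Dmat m).mulVec y = x) (hy : ∀ i : Fin m, L ∣ (i : ℕ) + 1 → (i : ℕ) + 1 < m → y i = 0) :
    ∑ i, y i ^ 2 ≤ (L : ℝ) ^ 2 * ∑ i, x i ^ 2 := by
  let ext : (Fin m → ℝ) → ℕ → ℝ := fun z n => if h : n < m then z ⟨n, h⟩ else 0
  have hext : ∀ z, (fun i : Fin m => ext z i) = z := by
    intro z
    funext i
    simp [ext]
  have hD := Dmat_mulVec (m := m) (ext y)
  rw [hext, hxy] at hD
  have hx : ∀ n < m, ext x n = ext y n - if 1 ≤ n then ext y (n - 1) else 0 := by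
    intro n hn
    have := congrFun hD ⟨n, hn⟩
    simp only at this
    rw [← this]
    simp [ext, hn]
  have h := sum_sq_le_of_block_sums L m hL (ext x) (ext y) ?_ ?_
  · rw [Finset.sum_range, Finset.sum_range] at h
    simpa [ext] using h
  · intro n hn hz
    rw [hx n hn]
    split_ifs with h1
    · have : ext y (n - 1) = 0 := by
        have hn1 : n - 1 < m := by omega
        simp only [ext, dif_pos hn1]
        apply hy
        · simp only [Nat.sub_add_cancel h1]
          exact Nat.dvd_of_mod_eq_zero hz
        · simp only; omega
      rw [this]; simp
    · simp
  · intro n hn hz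
    have h1 : 1 ≤ n := by
      rcases Nat.eq_zero_or_pos n with h | h
      · subst h; simp at hz
      · exact h
    rw [hx n hn, if_pos h1]
    ring

lemma singVal_Dinv_pow_le (m r j L : ℕ) (hL : 0 < L) (hLj : r * ((m - 1) / L) < j) :
    singVal ((Dmat m)⁻¹ ^ r) j ≤ (L : ℝ) ^ r := by
  refine singVal_le _ _ _ (by positivity) fun W hW => ?_
  have hidx : ∀ q : Fin ((m - 1) / L), L * (q + 1) - 1 < m := by
    intro q
    have h1 : L * (q + 1) ≤ L * ((m - 1) / L) := Nat.mul_le_mul_left _ q.2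
    have h2 := Nat.mul_div_le (m - 1) L
    have h3 : 0 < L * (q + 1) := by positivity
    omega
  let Φ : W →ₗ[ℝ] (Fin r × Fin ((m - 1) / L) → ℝ) :=
    LinearMap.pi fun p => LinearMap.proj (⟨L * (p.2 + 1) - 1, hidx p.2⟩ : Fin m) ∘ₗ
      Matrix.toLin' ((Dmat m)⁻¹ ^ ((p.1 : ℕ) + 1)) ∘ₗ
      (WithLp.linearEquiv 2 ℝ (Fin m → ℝ)).toLinearMap ∘ₗ W.subtype
  have hker : LinearMap.ker Φ ≠ ⊥ := by
    apply LinearMap.ker_ne_bot_of_finrank_lt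
    simpa [hW] using hLj
  obtain ⟨w, hw, hw0⟩ := Submodule.exists_mem_ne_zero_of_ne_bot hker
  refine ⟨w, w.2, fun h => hw0 (Subtype.ext h), ?_⟩
  set u : Fin m → ℝ := WithLp.ofLp (w : EuclideanSpace ℝ (Fin m)) with hu
  have hzero : ∀ k < r, ∀ i : Fin m, L ∣ (i : ℕ) + 1 → (i : ℕ) + 1 < m →
      ((Dmat m)⁻¹ ^ (k + 1)).mulVec u i = 0 := by
    rintro k hk i ⟨q, hq⟩ hi
    have hq0 : q ≠ 0 := by rintro rfl; simp at hq
    have hqN : q ≤ (m - 1) / L := by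
      rw [Nat.le_div_iff_mul_le hL, mul_comm]
      omega
    have := congrFun (LinearMap.mem_ker.1 hw) (⟨k, hk⟩, ⟨q - 1, by omega⟩)
    have hi' : i = ⟨L * (q - 1 + 1) - 1, hidx ⟨q - 1, by omega⟩⟩ := by
      ext
      simp only [Nat.sub_add_cancel (Nat.pos_of_ne_zero hq0)]
      omega
    rw [hi']
    exact this
  have hbound : ∀ k ≤ r, ∑ i, ((Dmat m)⁻¹ ^ k).mulVec u i ^ 2 ≤
      ((L : ℝ) ^ k) ^ 2 * ∑ i, u i ^ 2 := by
    intro k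
    induction k with
    | zero => simp
    | succ k ih =>
      intro hk
      have h1 := sum_sq_le_of_Dmat_mulVec L m hL (((Dmat m)⁻¹ ^ k).mulVec u)
        (((Dmat m)⁻¹ ^ (k + 1)).mulVec u)
        (by rw [Matrix.mulVec_mulVec, pow_succ', ← mul_assoc, Dmat_mul_inv, one_mul])
        (hzero k (by omega))
      refine h1.trans ?_
      calc _ ≤ (L : ℝ) ^ 2 * (((L : ℝ) ^ k) ^ 2 * ∑ i, u i ^ 2) := by
            gcongr; exact ih (by omega)
        _ = _ := by ring
  refine (abs_le_of_sq_le_sq' ?_ (by positivity)).2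
  rw [mul_pow, EuclideanSpace.norm_sq_eq, EuclideanSpace.norm_sq_eq]
  simpa using hbound r le_rfl

/-- bounds on the singular values of D^{-r}. -/
theorem singVal_Dinv_pow_bounds (m r j : ℕ) (hr : 1 ≤ r) (hj1 : 1 ≤ j) (hjm : j ≤ m) :
    (1 / (3 * Real.pi * r)) ^ r * ((m : ℝ) / j) ^ r ≤ singVal ((Dmat m)⁻¹ ^ r) j ∧
      singVal ((Dmat m)⁻¹ ^ r) j ≤ (6 * (r : ℝ)) ^ r * ((m : ℝ) / j) ^ r := by
  have hr' : (1 : ℝ) ≤ r := by exact_mod_cast hr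
  have hj' : (1 : ℝ) ≤ j := by exact_mod_cast hj1
  have hjm' : (j : ℝ) ≤ m := by exact_mod_cast hjm
  have hpi := Real.pi_gt_three
  have hrj : (1 : ℝ) ≤ r * j := by nlinarith
  have hpos : (0 : ℝ) < 3 * Real.pi * (r * j) := by positivity
  constructor
  · rw [← mul_pow]
    have hx : 1 / (3 * Real.pi * r) * ((m : ℝ) / j) = m / (3 * Real.pi * (r * j)) := by
      field_simp
    rw [hx]
    have hx0 : (0 : ℝ) ≤ m / (3 * Real.pi * (r * j)) := by positivity
    by_cases hc : 2 * ((m : ℝ) / (3 * Real.pi * (r * j))) ≤ 1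
    · exact le_singVal_of_le_one m r j hj1 hjm _ hx0 hc
    · have hc' : 3 * Real.pi * (r * j) < 2 * m := by
        rw [← mul_div_assoc, not_le, one_lt_div hpos] at hc
        exact hc
      have hm4 : 4 * (r * j) ≤ m := by
        have : (4 : ℝ) * (r * j) ≤ m := by nlinarith
        exact_mod_cast this
      set s := m / ((r + 1) * j) with hs
      have hd : 0 < (r + 1) * j := by positivity
      have hs2 : 2 ≤ s := by
        rw [hs, Nat.le_div_iff_mul_le hd]
        nlinarith
      have hmlt : m < (s + 1) * ((r + 1) * j) := by
        rw [mul_comm]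
        exact Nat.lt_mul_div_succ m hd
      have hms : m ≤ 3 * (r * j) * s := by
        have h1 : 2 * (s + 1) ≤ 3 * s := by omega
        have h2 : (r + 1) * j ≤ 2 * (r * j) := by nlinarith
        have h3 := Nat.mul_le_mul h1 h2
        nlinarith
      refine le_singVal_of_box m r j s hj1 (by omega) ?_ _ ?_
      · have := Nat.div_mul_le_self m ((r + 1) * j)
        rw [← hs] at this
        calc _ = s * ((r + 1) * j) := by ring
          _ ≤ m := this
      · have hms' : (m : ℝ) ≤ 3 * (r * j) * s := by exact_mod_cast hms
        have h1 : 3 * ((m : ℝ) / (3 * Real.pi * (r * j))) ≤ s := by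
          rw [← mul_div_assoc, div_le_iff₀ hpos]
          have : 0 ≤ 3 * ((r : ℝ) * j) * s := by positivity
          nlinarith
        nlinarith
  · rw [← mul_pow]
    set L := (r * m + j - 1) / j with hLdef
    have hL1 : r * m ≤ L * j := by
      have := Nat.lt_mul_div_succ (r * m + j - 1) (show 0 < j by omega)
      rw [← hLdef, mul_add, mul_comm j L] at this
      omega
    have hL2 : L * j ≤ r * m + j - 1 := Nat.div_mul_le_self _ _
    have hrm : 1 ≤ r * m := by nlinarith
    have hL0 : 0 < L := by
      rcases Nat.eq_zero_or_pos L with h | h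
      · rw [h] at hL1; omega
      · exact h
    refine (singVal_Dinv_pow_le m r j L hL0 ?_).trans ?_
    · have h1 := Nat.div_mul_le_self (m - 1) L
      set N := (m - 1) / L
      by_contra hcon
      push Not at hcon
      have h2 : j * L ≤ r * N * L := Nat.mul_le_mul_right _ hcon
      have h3 : r * (N * L) ≤ r * (m - 1) := Nat.mul_le_mul_left _ h1
      have h4 : r * (m - 1) < r * m := Nat.mul_lt_mul_of_pos_left (by omega) (by omega)
      nlinarith
    · apply pow_le_pow_left₀ (by positivity)
      rw [← mul_div_assoc, le_div_iff₀ (by positivity)]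
      have : L * j ≤ r * m + j := by omega
      have h1 : (L : ℝ) * j ≤ r * m + j := by exact_mod_cast this
      nlinarith
end
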